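/- arXiv:1606.08621 — 2 statements merged into one kernel-verified Lean document; each statement's English description precedes it below -/
import Mathlib

section
/- Let G be the parallel composition of r ≥ 2 paths whose lengths have mixed parities (at least one path of odd length and at least one path of even length), and let X be the projective toric subset parameterized by G. Let H_1 be the parallel composition of those paths of odd length and H_2 the parallel composition of those paths of even length. Then reg(G) = reg(H_1) + reg(H_2) + (q−2). -/
open MvPolynomial

/-- A finite multigraph without loops: each edge `e` has two distinct endpoints
`fst e` and `snd e`.  Multiple edges with the same endpoints are allowed. -/
structure Multigraph (V E : Type) : Type where
  fst : E → V
  snd : E → V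
  ne : ∀ e, fst e ≠ snd e

namespace Multigraph

variable {V E : Type}

/-- Vertex `v` is an endpoint of the edge `e`. -/
def Incident (G : Multigraph V E) (v : V) (e : E) : Prop :=
  G.fst e = v ∨ G.snd e = v

instance (G : Multigraph V E) [DecidableEq V] (v : V) : DecidablePred (G.Incident v) :=
  fun e => inferInstanceAs (Decidable (G.fst e = v ∨ G.snd e = v))

/-- The degree of a vertex: the number of edges incident to it. -/
noncomputable def degree (G : Multigraph V E) (v : V) : ℕ :=
  Nat.card {e : E // G.Incident v e}

/-- The graph has no isolated vertices. -/
def NoIsolated (G : Multigraph V E) : Prop :=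
  ∀ v : V, ∃ e : E, G.Incident v e

variable (K : Type) [Field K] [Fintype K]

/-- The point of the affine torus associated with an assignment `x` of nonzero
scalars to the vertices: its coordinate at an edge `e = {v,w}` is `x v * x w`. -/
def point (G : Multigraph V E) (x : V → Kˣ) : E → K :=
  fun e => (x (G.fst e) : K) * (x (G.snd e) : K)

/-- The projective toric subset `X` parameterized by `G`, realized as the set of
`Kˣ`-orbits (i.e. projective points) of the points `G.point K x`, `x : V → Kˣ`. -/
def toricSet (G : Multigraph V E) : Set (Set (E → K)) :=
  Set.range fun x : V → Kˣ => MulAction.orbit Kˣ (G.point K x)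

/-- The vanishing ideal `I(X)` of the projective toric subset parameterized by `G`:
the ideal of all polynomials each of whose homogeneous components vanishes at the
point `G.point K x` for every `x : V → Kˣ`. -/
def vanishingIdeal (G : Multigraph V E) : Ideal (MvPolynomial E K) where
  carrier := {f | ∀ (x : V → Kˣ) (d : ℕ), eval (G.point K x) (homogeneousComponent d f) = 0}
  zero_mem' := by intro x d; simp
  add_mem' := by
    intro a b ha hb x d
    rw [map_add, map_add, ha x d, hb x d, add_zero]
  smul_mem' := by
    intro c f hf x n
    rw [smul_eq_mul, ← sum_homogeneousComponent f, Finset.mul_sum, map_sum, map_sum]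
    refine Finset.sum_eq_zero fun d _ => ?_
    nth_rewrite 1 [← sum_homogeneousComponent c]
    rw [Finset.sum_mul, map_sum, map_sum]
    refine Finset.sum_eq_zero fun e _ => ?_
    have h1 : (homogeneousComponent e c * homogeneousComponent d f).IsHomogeneous (e + d) :=
      (homogeneousComponent_isHomogeneous e c).mul (homogeneousComponent_isHomogeneous d f)
    rw [homogeneousComponent_of_mem ((mem_homogeneousSubmodule _ _).mpr h1)]
    split_ifs
    · rw [map_mul, hf x d, mul_zero]
    · simp

/-- The Hilbert function of `S/I(X)`: the dimension over `K` of the degree-`d`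
homogeneous component of the quotient, realized as the image of the space of
degree-`d` homogeneous polynomials in the quotient. -/
noncomputable def hilbert (G : Multigraph V E) (d : ℕ) : ℕ :=
  Module.finrank K
    ((homogeneousSubmodule E K d).map (Ideal.Quotient.mkₐ K (G.vanishingIdeal K)).toLinearMap)

/-- The regularity `reg G`: the least `d` such that the Hilbert function of `S/I(X)`
at `d` equals the number of points of `X`. -/
noncomputable def reg (G : Multigraph V E) : ℕ :=
  sInf {d : ℕ | G.hilbert K d = (G.toricSet K).ncard}

/-- The graph obtained from `G` by deleting a vertex `v` and all edges incident
to it. -/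
def deleteVert (G : Multigraph V E) (v : V) :
    Multigraph {w : V // w ≠ v} {e : E // ¬ G.Incident v e} where
  fst e := ⟨G.fst e.1, fun h => e.2 (Or.inl h)⟩
  snd e := ⟨G.snd e.1, fun h => e.2 (Or.inr h)⟩
  ne e h := G.ne e.1 (congrArg Subtype.val h)

/-- The graph obtained from `G` by identifying the vertex `v₂` with the vertex `v₁`:
the edges are the same, and every endpoint equal to `v₂` is replaced by `v₁`.
This requires that `{v₁, v₂}` is a non-edge of `G`, so that no loops are created. -/
def identifyVert [DecidableEq V] (G : Multigraph V E) (v₁ v₂ : V) (h12 : v₁ ≠ v₂)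
    (h : ∀ e, ¬ (G.Incident v₁ e ∧ G.Incident v₂ e)) :
    Multigraph {w : V // w ≠ v₂} E where
  fst e := ⟨if G.fst e = v₂ then v₁ else G.fst e, by split_ifs with hh; exacts [h12, hh]⟩
  snd e := ⟨if G.snd e = v₂ then v₁ else G.snd e, by split_ifs with hh; exacts [h12, hh]⟩
  ne := by
    intro e heq
    rw [Subtype.ext_iff] at heq
    simp only at heq
    split_ifs at heq with h1 h2 h2
    · exact G.ne e (h1.trans h2.symm)
    · exact h e ⟨Or.inr heq.symm, Or.inl h1⟩
    · exact h e ⟨Or.inl heq, Or.inr h2⟩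
    · exact G.ne e heq

/-- The subgraph of `G` determined by a set `A` of edges of `G`, together with all
endpoints of those edges (so it has no isolated vertices). -/
def subgraph [DecidableEq V] (G : Multigraph V E) (A : Finset E) :
    Multigraph {v : V // ∃ e ∈ A, G.Incident v e} {e : E // e ∈ A} where
  fst e := ⟨G.fst e.1, e.1, e.2, Or.inl rfl⟩
  snd e := ⟨G.snd e.1, e.1, e.2, Or.inr rfl⟩
  ne e h := G.ne e.1 (congrArg Subtype.val h)

end Multigraph

/-- The vertex of the parallel composition of paths of lengths `k i` lying on the
`i`-th path at distance `j` from the common initial vertex:  `j = 0` gives the common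
initial vertex, `j = k i` the common terminal vertex, and `0 < j < k i` gives the
`j`-th interior vertex of the `i`-th path. -/
def pcVert {ι : Type} (k : ι → ℕ) (i : ι) (j : ℕ) :
    Bool ⊕ ((i : ι) × Fin (k i - 1)) :=
  if h0 : j = 0 then Sum.inl false
  else if h : j < k i then Sum.inr ⟨i, ⟨j - 1, by omega⟩⟩
  else Sum.inl true

/-- The parallel composition of the family of paths `P i` of lengths `k i` (`i : ι`):
the `i`-th path has `k i` edges indexed by `Fin (k i)`, its `j`-th edge joining the
vertices of the `i`-th path at distances `j` and `j + 1` from the common initial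
vertex.  All the initial vertices of the paths are identified to a single vertex and
all the terminal vertices are identified to a single vertex. -/
def parallelComp {ι : Type} (k : ι → ℕ) :
    Multigraph (Bool ⊕ ((i : ι) × Fin (k i - 1))) ((i : ι) × Fin (k i)) where
  fst e := pcVert k e.1 e.2.1
  snd e := pcVert k e.1 (e.2.1 + 1)
  ne := by
    rintro ⟨i, j⟩ h
    have hj := j.2
    simp only [pcVert] at h
    split_ifs at h <;> simp_all <;> omega

/-- The monomial `f i`: the product of the edges of the `i`-th path of the parallel
composition in odd positions (positions `1, 3, 5, ...`, i.e. indices `0, 2, 4, ...`). -/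
noncomputable def oddProd {ι : Type} (K : Type) [Field K] (k : ι → ℕ) (i : ι) :
    MvPolynomial ((i : ι) × Fin (k i)) K :=
  ∏ m : Fin ((k i + 1) / 2), X ⟨i, ⟨2 * m.1, by have := m.2; omega⟩⟩

/-- The monomial `g i`: the product of the edges of the `i`-th path of the parallel
composition in even positions (positions `2, 4, 6, ...`, i.e. indices `1, 3, 5, ...`). -/
noncomputable def evenProd {ι : Type} (K : Type) [Field K] (k : ι → ℕ) (i : ι) :
    MvPolynomial ((i : ι) × Fin (k i)) K :=
  ∏ m : Fin (k i / 2), X ⟨i, ⟨2 * m.1 + 1, by have := m.2; omega⟩⟩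


set_option linter.unusedSectionVars false

namespace Multigraph

section General

variable {V E : Type} [Fintype E] (K : Type) [Field K] [Fintype K]

/-- The character of the torus given by the monomial with exponent vector `a`. -/
def chi (G : Multigraph V E) (a : E → ℕ) : (V → Kˣ) →* K where
  toFun x := ∏ e, (G.point K x e) ^ (a e)
  map_one' := by simp [point]
  map_mul' x y := by
    rw [← Finset.prod_mul_distrib]
    refine Finset.prod_congr rfl fun e _ => ?_
    simp only [point, Pi.mul_apply, Units.val_mul]
    rw [← mul_pow]
    congr 1
    ring

theorem chi_apply (G : Multigraph V E) (a : E → ℕ) (x : V → Kˣ) :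
    G.chi K a x = ∏ e, (G.point K x e) ^ (a e) := rfl

/-- total degree -/
def wt (a : E → ℕ) : ℕ := ∑ e, a e

theorem wt_add (a b : E → ℕ) : wt (a + b) = wt a + wt b := by
  simp [wt, Finset.sum_add_distrib]

theorem chi_add (G : Multigraph V E) (a b : E → ℕ) : G.chi K (a + b) = G.chi K a * G.chi K b := by
  ext x
  simp [chi_apply, pow_add, Finset.prod_mul_distrib]

theorem point_pow (G : Multigraph V E) (x : V → Kˣ) (e : E) :
    G.point K x e ^ (Fintype.card K - 1) = 1 := by
  apply FiniteField.pow_card_sub_one_eq_one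
  simp [point]

theorem point_ne (G : Multigraph V E) (x : V → Kˣ) (e : E) :
    G.point K x e ≠ 0 := by
  simp [point]

theorem chi_single [DecidableEq E] (G : Multigraph V E) (e : E) (m : ℕ) (x : V → Kˣ) :
    G.chi K (Pi.single e m) x = G.point K x e ^ m := by
  rw [chi_apply, Finset.prod_eq_single e]
  · simp
  · intro b _ hb
    simp [Pi.single_eq_of_ne hb]
  · simp

theorem wt_single [DecidableEq E] (e : E) (m : ℕ) : wt (Pi.single e m : E → ℕ) = m := by
  simp [wt]

theorem chi_single_mul [DecidableEq E] (G : Multigraph V E) (e : E) (m : ℕ) :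
    G.chi K (Pi.single e ((Fintype.card K - 1) * m)) = 1 := by
  ext x
  rw [chi_single, pow_mul, point_pow]
  simp

theorem finrank_map_eq {M N P : Type} [AddCommGroup M] [Module K M] [AddCommGroup N] [Module K N]
    [AddCommGroup P] [Module K P] (f : M →ₗ[K] N) (g : M →ₗ[K] P) (p : Submodule K M)
    (h : ∀ m ∈ p, f m = 0 ↔ g m = 0) :
    Module.finrank K (p.map f) = Module.finrank K (p.map g) := by
  have hk : LinearMap.ker (f.domRestrict p) = LinearMap.ker (g.domRestrict p) := by
    ext ⟨m, hm⟩
    simpa using h m hm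
  rw [← LinearMap.range_domRestrict, ← LinearMap.range_domRestrict]
  exact LinearEquiv.finrank_eq (((f.domRestrict p).quotKerEquivRange.symm.trans
    (Submodule.quotEquivOfEq _ _ hk)).trans (g.domRestrict p).quotKerEquivRange)

/-- Evaluation at all points of the torus. -/
noncomputable def evalMap (G : Multigraph V E) : MvPolynomial E K →ₗ[K] ((V → Kˣ) → K) :=
  LinearMap.pi fun x => (aeval (G.point K x)).toLinearMap

theorem evalMap_apply (G : Multigraph V E) (f : MvPolynomial E K) (x : V → Kˣ) :
    G.evalMap K f x = eval (G.point K x) f := by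
  simp [evalMap, aeval_eq_eval]

theorem finrank_span_chi [Finite V] (S : Set ((V → Kˣ) →* K)) :
    Module.finrank K (Submodule.span K ((fun f : (V → Kˣ) →* K => (f : (V → Kˣ) → K)) '' S)) =
      S.ncard := by
  classical
  have := Fintype.ofFinite V
  have hli := linearIndependent_monoidHom (V → Kˣ) K
  have hfin : Finite ((V → Kˣ) →* K) := hli.finite
  have : Fintype S := Fintype.ofFinite S
  rw [Set.image_eq_range]
  refine (finrank_span_eq_card (hli.comp (Subtype.val : S → _) Subtype.val_injective)).trans ?_
  rw [← Nat.card_eq_fintype_card]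
  rfl

theorem hilbert_eq [Finite V] (G : Multigraph V E) (d : ℕ) :
    G.hilbert K d = (G.chi K '' {a | wt a = d}).ncard := by
  classical
  rw [← finrank_span_chi, hilbert, finrank_map_eq K _ (G.evalMap K)]
  · suffices h : (homogeneousSubmodule E K d).map (G.evalMap K) =
        Submodule.span K ((fun f : (V → Kˣ) →* K => (f : (V → Kˣ) → K)) ''
          (G.chi K '' {a | wt a = d})) by rw [h]
    rw [homogeneousSubmodule_eq_finsupp_supported, AddMonoidAlgebra.supported_eq_span_single, Submodule.map_span]
    congr 1
    ext f
    simp only [Set.mem_image, Set.mem_ofPred_eq]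
    constructor
    · rintro ⟨_, ⟨s, hs, rfl⟩, rfl⟩
      refine ⟨_, ⟨s, ?_, rfl⟩, ?_⟩
      · rw [wt, ← hs, Finsupp.degree_eq_sum]
      · ext x
        rw [evalMap_apply]
        erw [eval_monomial]
        rw [one_mul, Finsupp.prod_fintype _ _ (by simp)]
        rfl
    · rintro ⟨_, ⟨a, ha, rfl⟩, rfl⟩
      refine ⟨_, ⟨Finsupp.equivFunOnFinite.symm a, ?_, rfl⟩, ?_⟩
      · rw [← ha, wt, Finsupp.degree_eq_sum]; rfl
      · ext x
        rw [evalMap_apply]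
        erw [eval_monomial]
        rw [one_mul, Finsupp.prod_fintype _ _ (by simp)]
        rfl
  · intro f hf
    rw [AlgHom.toLinearMap_apply, Ideal.Quotient.mkₐ_eq_mk, Ideal.Quotient.eq_zero_iff_mem]
    constructor
    · intro h
      ext x
      rw [evalMap_apply]
      have := h x d
      rwa [homogeneousComponent_of_mem hf, if_pos rfl] at this
    · intro h x d'
      rw [homogeneousComponent_of_mem hf]
      split_ifs
      · rw [← evalMap_apply, h]; rfl
      · simp

/-- The span of the characters of degree divisible by `q-1`. -/
def S0 (G : Multigraph V E) : Set ((V → Kˣ) →* K) := G.chi K '' {a | (Fintype.card K - 1) ∣ wt a}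

theorem orbit_eq_iff (G : Multigraph V E) (x y : V → Kˣ) :
    MulAction.orbit Kˣ (G.point K x) = MulAction.orbit Kˣ (G.point K y) ↔
      ∃ u : Kˣ, ∀ e, G.point K x e = u * G.point K y e := by
  rw [MulAction.orbit_eq_iff, MulAction.mem_orbit_iff]
  constructor
  · rintro ⟨u, hu⟩
    refine ⟨u, fun e => ?_⟩
    rw [← hu]; rfl
  · rintro ⟨u, hu⟩
    refine ⟨u, ?_⟩
    ext e
    rw [hu]; rfl

theorem chi_scale (G : Multigraph V E) (x y : V → Kˣ) (u : Kˣ)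
    (h : ∀ e, G.point K x e = u * G.point K y e) (a : E → ℕ) :
    G.chi K a x = (u : K) ^ wt a * G.chi K a y := by
  simp only [chi_apply, h, mul_pow, Finset.prod_mul_distrib, wt, Finset.prod_pow_eq_pow_sum]

theorem card_pos : 0 < Fintype.card K - 1 := by
  have := Fintype.one_lt_card (α := K)
  omega

theorem toric_card [Finite V] [Nonempty E] (G : Multigraph V E) :
    (G.toricSet K).ncard = (G.S0 K).ncard := by
  classical
  have := Fintype.ofFinite V
  rw [← finrank_span_chi]
  obtain ⟨e0⟩ := ‹Nonempty E›
  set n := Fintype.card K - 1 with hn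
  have hnpos : 0 < n := card_pos K
  let S : Set ((V → Kˣ) → K) := (fun f : (V → Kˣ) →* K => (f : (V → Kˣ) → K)) '' G.S0 K
  let C : Submonoid ((V → Kˣ) → K) :=
    { carrier := S
      one_mem' := ⟨1, ⟨0, by simp [wt], by ext x; simp [chi_apply]⟩, rfl⟩
      mul_mem' := by
        rintro _ _ ⟨_, ⟨a, ha, rfl⟩, rfl⟩ ⟨_, ⟨b, hb, rfl⟩, rfl⟩
        refine ⟨_, ⟨a + b, ?_, rfl⟩, ?_⟩
        · rw [Set.mem_ofPred_eq, wt_add]; exact dvd_add ha hb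
        · ext x; simp [chi_add] }
  have hspan : Submodule.span K S = (Algebra.adjoin K S).toSubmodule := by
    rw [Algebra.adjoin_eq_span]
    congr 1
    exact (Submonoid.closure_eq C).symm ▸ rfl
  change _ = Module.finrank K (Submodule.span K S)
  let π : (V → Kˣ) → G.toricSet K := fun x => ⟨_, x, rfl⟩
  have hπs : Function.Surjective π := by
    rintro ⟨_, x, rfl⟩; exact ⟨x, rfl⟩
  have hπ : ∀ x y, π x = π y ↔ ∃ u : Kˣ, ∀ e, G.point K x e = u * G.point K y e := by
    intro x y
    rw [← orbit_eq_iff]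
    exact Subtype.mk_eq_mk
  have hfin : Finite (G.toricSet K) := Finite.of_surjective π hπs
  have := Fintype.ofFinite (G.toricSet K)
  have hr : LinearMap.range (LinearMap.funLeft K K π) = Submodule.span K S := by
    apply le_antisymm
    · rw [hspan]
      have hu : ∀ e, (fun x => G.point K x e * G.point K x e0 ^ (n - 1)) ∈ Algebra.adjoin K S := by
        intro e
        apply Algebra.subset_adjoin
        refine ⟨_, ⟨Pi.single e 1 + Pi.single e0 (n - 1), ?_, rfl⟩, ?_⟩
        · rw [Set.mem_ofPred_eq, wt_add, wt_single, wt_single, ← hn]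
          exact ⟨1, by omega⟩
        · ext x
          simp [chi_add, chi_single]
      have hind : ∀ x0, (fun x => if π x = π x0 then (1 : K) else 0) ∈ Algebra.adjoin K S := by
        intro x0
        have key : (fun x => if π x = π x0 then (1 : K) else 0) =
            ∏ e, (1 - ((fun x => G.point K x e * G.point K x e0 ^ (n - 1)) -
              algebraMap K ((V → Kˣ) → K) (G.point K x0 e * G.point K x0 e0 ^ (n - 1))) ^ n) := by
          ext x
          simp only [Finset.prod_apply, Pi.sub_apply, Pi.pow_apply, Pi.one_apply, Pi.algebraMap_apply,
            Algebra.algebraMap_self_apply]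
          split_ifs with hx
          · obtain ⟨u, hu⟩ := (hπ _ _).1 hx
            symm
            apply Finset.prod_eq_one
            intro e _
            have h1 : G.point K x e * G.point K x e0 ^ (n - 1) =
                G.point K x0 e * G.point K x0 e0 ^ (n - 1) := by
              rw [hu, hu e0, mul_pow]
              have : (u : K) * (u : K) ^ (n - 1) = 1 := by
                rw [← pow_succ', Nat.sub_add_cancel hnpos]
                exact FiniteField.pow_card_sub_one_eq_one _ u.ne_zero
              linear_combination (G.point K x0 e * G.point K x0 e0 ^ (n - 1)) * this
            rw [h1, sub_self, zero_pow hnpos.ne', sub_zero]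
          · symm
            rw [Finset.prod_eq_zero_iff]
            by_contra hcon
            push Not at hcon
            apply hx
            rw [hπ]
            refine ⟨Units.mk0 (G.point K x e0) (point_ne _ _ _ _) /
              Units.mk0 (G.point K x0 e0) (point_ne _ _ _ _), fun e => ?_⟩
            have h1 : G.point K x e * G.point K x e0 ^ (n - 1) =
                G.point K x0 e * G.point K x0 e0 ^ (n - 1) := by
              by_contra hne
              apply hcon e (Finset.mem_univ _)
              rw [FiniteField.pow_card_sub_one_eq_one _ (sub_ne_zero.2 hne), sub_self]
            have hA : G.point K x e0 ^ (n - 1) * G.point K x e0 = 1 := by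
              rw [← pow_succ, Nat.sub_add_cancel hnpos]
              exact point_pow K G x e0
            have hB : G.point K x0 e0 ^ (n - 1) * G.point K x0 e0 = 1 := by
              rw [← pow_succ, Nat.sub_add_cancel hnpos]
              exact point_pow K G x0 e0
            have h0 := point_ne K G x0 e0
            rw [Units.val_div_eq_div_val, Units.val_mk0, Units.val_mk0]
            field_simp
            linear_combination (G.point K x e0 * G.point K x0 e0) * h1
              - (G.point K x e * G.point K x0 e0) * hA + (G.point K x0 e * G.point K x e0) * hB
        rw [key]
        refine Subalgebra.prod_mem _ fun e _ => ?_
        exact Subalgebra.sub_mem _ (Subalgebra.one_mem _)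
          (Subalgebra.pow_mem _ (Subalgebra.sub_mem _ (hu e) (Subalgebra.algebraMap_mem _ _)) _)
      rintro _ ⟨g, rfl⟩
      have : LinearMap.funLeft K K π g =
          ∑ P, g P • (fun x => if π x = π (Function.surjInv hπs P) then (1 : K) else 0) := by
        ext x
        simp [LinearMap.funLeft_apply, Finset.sum_apply, Function.surjInv_eq hπs]
      rw [this]
      exact Submodule.sum_mem _ fun P _ => Submodule.smul_mem _ _ (hind _)
    · rw [Submodule.span_le]
      rintro _ ⟨_, ⟨a, ⟨c, hc⟩, rfl⟩, rfl⟩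
      refine ⟨fun P => G.chi K a (Function.surjInv hπs P), ?_⟩
      ext x
      rw [LinearMap.funLeft_apply]
      obtain ⟨u, hu⟩ := (hπ _ _).1 (Function.surjInv_eq hπs (π x))
      rw [chi_scale K G _ _ u hu a, hc, pow_mul, FiniteField.pow_card_sub_one_eq_one _ u.ne_zero]
      simp
  rw [← hr, LinearMap.finrank_range_of_inj (LinearMap.funLeft_injective_of_surjective K K π hπs)]
  rw [Module.finrank_fintype_fun_eq_card, ← Nat.card_eq_fintype_card]
  rfl

/-- Equivalence of exponent vectors. -/
def Eqv (G : Multigraph V E) (a b : E → ℕ) : Prop :=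
  G.chi K a = G.chi K b ∧ wt a ≡ wt b [MOD (Fintype.card K - 1)]

theorem chi_finite [Finite V] : Finite ((V → Kˣ) →* K) := by
  have := Fintype.ofFinite V
  exact (linearIndependent_monoidHom (V → Kˣ) K).finite

theorem ncard_residue [Finite V] [Nonempty E] (G : Multigraph V E) (d : ℕ) :
    (G.chi K '' {a | wt a ≡ d [MOD (Fintype.card K - 1)]}).ncard = (G.toricSet K).ncard := by
  classical
  rw [toric_card]
  obtain ⟨e0⟩ := ‹Nonempty E›
  have hfin := chi_finite (V := V) K
  have hn := card_pos K
  set n := Fintype.card K - 1 with hndef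
  have inj : ∀ m, Function.Injective
      (fun f : (V → Kˣ) →* K => f * G.chi K (Pi.single e0 m)) := by
    intro m f g h
    refine MonoidHom.ext fun x => ?_
    have := DFunLike.congr_fun h x
    simp only [MonoidHom.mul_apply, chi_single] at this
    exact mul_right_cancel₀ (pow_ne_zero _ (point_ne K G x e0)) this
  have hstep : ∀ c d m : ℕ, c + m ≡ d [MOD n] →
      (G.chi K '' {a | wt a ≡ c [MOD n]}).ncard ≤ (G.chi K '' {a | wt a ≡ d [MOD n]}).ncard := by
    intro c d m h
    rw [← Set.ncard_image_of_injective _ (inj m)]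
    apply Set.ncard_le_ncard _ (Set.toFinite _)
    rintro _ ⟨_, ⟨a, ha, rfl⟩, rfl⟩
    refine ⟨a + Pi.single e0 m, ?_, chi_add _ _ _ _⟩
    rw [Set.mem_ofPred_eq, wt_add, wt_single]
    exact (Nat.ModEq.add_right m ha).trans h
  have h0 : G.S0 K = G.chi K '' {a | wt a ≡ 0 [MOD n]} := by
    simp only [S0, Nat.modEq_zero_iff_dvd, hndef]
  rw [h0]
  apply le_antisymm
  · apply hstep d 0 (d * (n - 1))
    rw [Nat.modEq_zero_iff_dvd]
    refine ⟨d, ?_⟩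
    obtain ⟨m, hm⟩ : ∃ m, n = m + 1 := ⟨n - 1, by omega⟩
    rw [hm]; simp; ring
  · exact hstep 0 d d (by simp [Nat.ModEq.refl])

theorem good_iff [Finite V] [Nonempty E] (G : Multigraph V E) (d : ℕ) :
    G.hilbert K d = (G.toricSet K).ncard ↔
      ∀ a, wt a ≡ d [MOD (Fintype.card K - 1)] → ∃ b, G.Eqv K a b ∧ wt b = d := by
  have hfin := chi_finite (V := V) K
  rw [hilbert_eq, ← ncard_residue K G d]
  have hsub : G.chi K '' {a | wt a = d} ⊆
      G.chi K '' {a | wt a ≡ d [MOD (Fintype.card K - 1)]} := by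
    apply Set.image_mono
    intro a ha
    rw [Set.mem_ofPred_eq] at ha ⊢
    rw [ha]
  constructor
  · intro h a ha
    have heq := Set.eq_of_subset_of_ncard_le hsub h.ge (Set.toFinite _)
    have : G.chi K a ∈ G.chi K '' {a | wt a = d} := by
      rw [heq]; exact ⟨a, ha, rfl⟩
    obtain ⟨b, hb, hba⟩ := this
    rw [Set.mem_ofPred_eq] at hb
    exact ⟨b, ⟨hba.symm, by rw [hb]; exact ha⟩, hb⟩
  · intro h
    congr 1
    apply hsub.antisymm
    rintro _ ⟨a, ha, rfl⟩
    obtain ⟨b, ⟨hb, _⟩, hb'⟩ := h a ha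
    exact ⟨b, hb', hb.symm⟩

/-- `M` is the maximum over classes of the minimal weight in a class. -/
def IsMax (G : Multigraph V E) (M : ℕ) : Prop :=
  (∀ a, ∃ b, G.Eqv K a b ∧ wt b ≤ M) ∧ ∃ a, ∀ b, G.Eqv K a b → M ≤ wt b

theorem exists_isMax [Finite V] (G : Multigraph V E) : ∃ M, G.IsMax K M := by
  classical
  have hex : ∃ M, ∀ a, ∃ b, G.Eqv K a b ∧ wt b ≤ M := by
    refine ⟨Fintype.card E * (Fintype.card K - 1), fun a => ⟨fun e => a e % (Fintype.card K - 1), ⟨?_, ?_⟩, ?_⟩⟩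
    · refine MonoidHom.ext fun x => ?_
      simp only [chi_apply]
      refine Finset.prod_congr rfl fun e _ => ?_
      exact pow_eq_pow_mod _ (point_pow K G x e)
    · unfold wt Nat.ModEq
      exact Finset.sum_nat_mod _ _ _
    · unfold wt
      refine (Finset.sum_le_card_nsmul _ _ (Fintype.card K - 1) fun e _ =>
        (Nat.mod_lt _ (card_pos K)).le).trans ?_
      simp
  refine ⟨Nat.find hex, Nat.find_spec hex, ?_⟩
  rcases h : Nat.find hex with _ | m
  · exact ⟨0, fun _ _ => Nat.zero_le _⟩
  · have := Nat.find_min hex (m := m) (by omega)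
    push Not at this
    exact this

theorem reg_add [Finite V] [Nonempty E] (G : Multigraph V E) (M : ℕ) (hM : G.IsMax K M) :
    G.reg K + (Fintype.card K - 2) = M := by
  classical
  obtain ⟨hM1, a₀, ha₀⟩ := hM
  have e0 : E := Classical.arbitrary E
  have hn := card_pos K
  have hn2 : Fintype.card K - 2 = Fintype.card K - 1 - 1 := by omega
  rw [hn2]
  unfold reg
  simp only [good_iff]
  have hs := fun m => G.chi_single_mul K e0 m
  set n := Fintype.card K - 1 with hndef
  -- lifting the weight by multiples of n
  have lift : ∀ a b d, G.Eqv K a b → wt a ≡ d [MOD n] → wt b ≤ d →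
      ∃ b, G.Eqv K a b ∧ wt b = d := by
    intro a b d hab had hbd
    have h1 : wt b ≡ d [MOD n] := hab.2.symm.trans had
    obtain ⟨c, hc⟩ := (Nat.modEq_iff_dvd' hbd).1 h1
    refine ⟨b + Pi.single e0 (n * c), ⟨?_, ?_⟩, ?_⟩
    · rw [chi_add, hs, mul_one, hab.1]
    · rw [wt_add, wt_single, ← hc]
      rw [show wt b + (d - wt b) = d by omega]
      exact had
    · rw [wt_add, wt_single, ← hc]; omega
  have hMge : n - 1 ≤ M := by
    obtain ⟨b, hb, hbM⟩ := hM1 (Pi.single e0 (n - 1))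
    have := hb.2
    rw [wt_single] at this
    change n - 1 ≡ wt b [MOD n] at this
    unfold Nat.ModEq at this
    rw [Nat.mod_eq_of_lt (by omega)] at this
    have := Nat.mod_le (wt b) n
    omega
  have hmem : M - (n - 1) ∈ {d : ℕ | ∀ a, wt a ≡ d [MOD n] → ∃ b, G.Eqv K a b ∧ wt b = d} := by
    intro a ha
    obtain ⟨b, hb, hbM⟩ := hM1 a
    refine lift a b _ hb ha ?_
    have h1 : wt b ≡ M - (n - 1) [MOD n] := hb.2.symm.trans ha
    by_contra hlt
    push Not at hlt
    obtain ⟨c, hc⟩ := (Nat.modEq_iff_dvd' hlt.le).1 h1.symm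
    rcases c with _ | c
    · omega
    · have : n * (c + 1) ≥ n := Nat.le_mul_of_pos_right _ (by omega)
      omega
  have hmin : ∀ d, (∀ a, wt a ≡ d [MOD n] → ∃ b, G.Eqv K a b ∧ wt b = d) → M - (n - 1) ≤ d := by
    intro d hd
    have hsucc : ∀ j, ∀ a, wt a ≡ d + j [MOD n] → ∃ b, G.Eqv K a b ∧ wt b = d + j := by
      intro j
      induction j with
      | zero => exact hd
      | succ j ih =>
        intro a ha
        obtain ⟨b, hb, hbw⟩ := ih (a + Pi.single e0 (n - 1)) (by
          rw [wt_add, wt_single]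
          have h2 := Nat.ModEq.add_right (n - 1) ha
          rw [show d + (j + 1) + (n - 1) = d + j + n by omega] at h2
          exact h2.trans (by simp [Nat.ModEq]))
        refine ⟨b + Pi.single e0 1, ⟨?_, ?_⟩, ?_⟩
        · rw [chi_add, ← hb.1, chi_add, mul_assoc, ← chi_add, ← Pi.single_add,
            show n - 1 + 1 = n * 1 by omega, hs, mul_one]
        · rw [wt_add, wt_single, hbw]; exact ha
        · rw [wt_add, wt_single, hbw]; rfl
    by_contra hlt
    push Not at hlt
    -- choose j ≤ n - 1 with d + j ≡ wt a₀
    obtain ⟨b₁, hb₁, hb₁M⟩ := hM1 a₀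
    have hb₁e : wt b₁ = M := le_antisymm hb₁M (ha₀ b₁ hb₁)
    have hj : (M - d) % n < n := Nat.mod_lt _ hn
    have hcong : M ≡ d + (M - d) % n [MOD n] := by
      have := (Nat.mod_modEq (M - d) n).add_left d
      rw [show d + (M - d) = M by omega] at this
      exact this.symm
    obtain ⟨b, hb, hbw⟩ := hsucc ((M - d) % n) a₀ (hb₁.2.trans (by rw [hb₁e]; exact hcong))
    have := ha₀ b hb
    omega
  have h1 : sInf {d : ℕ | ∀ a, wt a ≡ d [MOD n] → ∃ b, G.Eqv K a b ∧ wt b = d} = M - (n - 1) :=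
    le_antisymm (Nat.sInf_le hmem) (hmin _ (Nat.sInf_mem ⟨_, hmem⟩))
  rw [h1]
  omega

end General

end Multigraph

section Parallel

open Multigraph

variable (K : Type) [Field K] [Fintype K]

/-- Value of the monomial `a` at the edge values coming from path labels `p`. -/
def pv {ι : Type} [Fintype ι] (k : ι → ℕ) (p : ι → ℕ → Kˣ) (a : ((i : ι) × Fin (k i)) → ℕ) : Kˣ :=
  ∏ e, (p e.1 e.2.1 * p e.1 (e.2.1 + 1)) ^ a e

theorem pv_const {ι : Type} [Fintype ι] (k : ι → ℕ) (p : ι → ℕ → Kˣ)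
    (a : ((i : ι) × Fin (k i)) → ℕ) (u : Kˣ) (h : ∀ i j, p i j * p i (j + 1) = u) :
    pv K k p a = u ^ wt a := by
  simp only [pv, h, wt, Finset.prod_pow_eq_pow_sum]

theorem chi_eq_iff {ι : Type} [Fintype ι] (k : ι → ℕ) (hk : ∀ i, 0 < k i)
    (a b : ((i : ι) × Fin (k i)) → ℕ) :
    (parallelComp k).chi K a = (parallelComp k).chi K b ↔
      ∀ (s t : Kˣ) (p : ι → ℕ → Kˣ), (∀ i, p i 0 = s) → (∀ i, p i (k i) = t) →
        pv K k p a = pv K k p b := by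
  have hchi : ∀ (x : _ → Kˣ) c, (parallelComp k).chi K c x =
      (pv K k (fun i j => x (pcVert k i j)) c : K) := by
    intro x c
    simp [chi_apply, pv, point, parallelComp]
  constructor
  · intro h s t p hs ht
    let x : Bool ⊕ ((i : ι) × Fin (k i - 1)) → Kˣ :=
      Sum.elim (fun c => if c then t else s) (fun v => p v.1 (v.2.1 + 1))
    have hx : ∀ i j, j ≤ k i → x (pcVert k i j) = p i j := by
      intro i j hj
      unfold pcVert
      split_ifs with h0 h1
      · subst h0; simp [x, hs]
      · simp only [x, Sum.elim_inr]
        rw [Nat.sub_add_cancel (by omega)]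
      · have : j = k i := by omega
        subst this; simp [x, ht]
    have hp : ∀ c, pv K k p c = pv K k (fun i j => x (pcVert k i j)) c := by
      intro c
      unfold pv
      refine Finset.prod_congr rfl fun e _ => ?_
      have := e.2.2
      simp only []
      rw [hx e.1 e.2.1 (by omega), hx e.1 (e.2.1 + 1) (by omega)]
    rw [hp, hp]
    apply Units.ext
    rw [← hchi, ← hchi, h]
  · intro h
    refine MonoidHom.ext fun x => ?_
    rw [hchi, hchi, h (x (Sum.inl false)) (x (Sum.inl true))]
    · intro i; simp [pcVert]
    · intro i
      have := (hk i).ne'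
      simp [pcVert, this]

variable {r : ℕ} (k : Fin r → ℕ)

/-- Restriction of an exponent vector to the odd paths. -/
def resO (a : ((i : Fin r) × Fin (k i)) → ℕ) (e : (i : {i : Fin r // Odd (k i)}) × Fin (k i.1)) :
    ℕ := a ⟨e.1.1, e.2⟩

/-- Restriction of an exponent vector to the even paths. -/
def resE (a : ((i : Fin r) × Fin (k i)) → ℕ) (e : (i : {i : Fin r // Even (k i)}) × Fin (k i.1)) :
    ℕ := a ⟨e.1.1, e.2⟩

theorem prod_parity {M : Type} [CommMonoid M] (f : Fin r → M) :
    ∏ i, f i = (∏ i : {i : Fin r // Odd (k i)}, f i) * ∏ i : {i : Fin r // Even (k i)}, f i := by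
  rw [← Fintype.prod_subtype_mul_prod_subtype (fun i => Odd (k i)) f]
  congr 1
  exact Fintype.prod_equiv (Equiv.subtypeEquivRight fun i => Nat.not_odd_iff_even) _ _
    fun i => rfl

theorem wt_split (a : ((i : Fin r) × Fin (k i)) → ℕ) :
    wt a = wt (resO k a) + wt (resE k a) := by
  have := prod_parity k (M := Multiplicative ℕ)
    (fun i => Multiplicative.ofAdd (∑ j : Fin (k i), a ⟨i, j⟩))
  unfold wt
  rw [Fintype.sum_sigma, Fintype.sum_sigma, Fintype.sum_sigma]
  exact this

theorem pv_split (p : Fin r → ℕ → Kˣ) (a : ((i : Fin r) × Fin (k i)) → ℕ) :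
    pv K k p a =
      pv K (fun i : {i : Fin r // Odd (k i)} => k i.1) (fun i => p i.1) (resO k a) *
      pv K (fun i : {i : Fin r // Even (k i)} => k i.1) (fun i => p i.1) (resE k a) := by
  unfold pv
  rw [Fintype.prod_sigma, Fintype.prod_sigma, Fintype.prod_sigma]
  exact prod_parity k _

theorem eqv_iff (hk : ∀ i, 0 < k i) (a b : ((i : Fin r) × Fin (k i)) → ℕ) :
    (parallelComp k).Eqv K a b ↔
      (parallelComp fun i : {i : Fin r // Odd (k i)} => k i.1).Eqv K (resO k a) (resO k b) ∧
      (parallelComp fun i : {i : Fin r // Even (k i)} => k i.1).Eqv K (resE k a) (resE k b) := by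
  classical
  unfold Eqv
  rw [chi_eq_iff K _ hk,
    chi_eq_iff K (fun i : {i : Fin r // Odd (k i)} => k i.1) (fun i => hk i.1),
    chi_eq_iff K (fun i : {i : Fin r // Even (k i)} => k i.1) (fun i => hk i.1)]
  have hcard : Fintype.card K - 1 = Fintype.card Kˣ := (Fintype.card_units K).symm
  constructor
  · rintro ⟨h, hw⟩
    have hwE : wt (resE k a) ≡ wt (resE k b) [MOD Fintype.card K - 1] := by
      obtain ⟨u, hu⟩ := IsCyclic.exists_generator (α := Kˣ)
      have hord : orderOf u = Fintype.card K - 1 := by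
        rw [hcard, orderOf_eq_card_of_forall_mem_zpowers hu, Nat.card_eq_fintype_card]
      rw [← hord, ← pow_eq_pow_iff_modEq]
      have h1 := h 1 1 (fun i j => if Even (k i) ∧ Odd j then u else 1) (by simp) (by
        intro i
        rw [if_neg]
        rintro ⟨h1, h2⟩
        exact (Nat.not_odd_iff_even.2 h1) h2)
      rw [pv_split, pv_split] at h1
      have hO : ∀ c, pv K (fun i : {i : Fin r // Odd (k i)} => k i.1)
          (fun i j => if Even (k i.1) ∧ Odd j then u else 1) c = 1 := by
        intro c
        rw [pv_const K _ _ _ 1, one_pow]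
        intro i j
        have := Nat.not_even_iff_odd.2 i.2
        simp [this]
      have hE : ∀ c, pv K (fun i : {i : Fin r // Even (k i)} => k i.1)
          (fun i j => if Even (k i.1) ∧ Odd j then u else 1) c = u ^ wt c := by
        intro c
        rw [pv_const K _ _ _ u]
        intro i j
        have := i.2
        rcases Nat.even_or_odd j with hj | hj
        · simp [this, Nat.not_odd_iff_even.2 hj, hj.add_one]
        · simp [this, hj, Nat.not_odd_iff_even.2 hj.add_one]
      rw [hO, hO, hE, hE, one_mul, one_mul] at h1
      exact h1
    have hwO : wt (resO k a) ≡ wt (resO k b) [MOD Fintype.card K - 1] := by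
      rw [wt_split, wt_split k b] at hw
      exact Nat.ModEq.add_right_cancel hwE hw
    have hpow : ∀ u : Kˣ, u ^ wt (resO k a) = u ^ wt (resO k b) := by
      intro u
      rw [pow_eq_pow_iff_modEq]
      refine hwO.of_dvd ?_
      rw [hcard]
      exact orderOf_dvd_card
    refine ⟨⟨?_, hwO⟩, ⟨?_, hwE⟩⟩
    · intro s t p hs ht
      have h1 := h 1 1 (fun i j => if hi : Odd (k i) then
          p ⟨i, hi⟩ j * (if Even j then s⁻¹ else t⁻¹) else 1) (by
        intro i
        split_ifs with hi hj
        · simp [hs]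
        · exact absurd Even.zero hj
        · rfl) (by
        intro i
        split_ifs with hi hj
        · exact absurd hj (Nat.not_even_iff_odd.2 hi)
        · rw [ht ⟨i, hi⟩, mul_inv_cancel]
        · rfl)
      rw [pv_split, pv_split] at h1
      have hE : ∀ c, pv K (fun i : {i : Fin r // Even (k i)} => k i.1)
          (fun i j => if hi : Odd (k i.1) then
            p ⟨i.1, hi⟩ j * (if Even j then s⁻¹ else t⁻¹) else 1) c = 1 := by
        intro c
        rw [pv_const K _ _ _ 1, one_pow]
        intro i j
        have := Nat.not_odd_iff_even.2 i.2
        simp [this]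
      have hO : ∀ c, pv K (fun i : {i : Fin r // Odd (k i)} => k i.1)
          (fun i j => if hi : Odd (k i.1) then
            p ⟨i.1, hi⟩ j * (if Even j then s⁻¹ else t⁻¹) else 1) c =
          pv K (fun i : {i : Fin r // Odd (k i)} => k i.1) p c * ((s * t)⁻¹) ^ wt c := by
        intro c
        unfold pv wt
        rw [← Finset.prod_pow_eq_pow_sum, ← Finset.prod_mul_distrib]
        refine Finset.prod_congr rfl fun e _ => ?_
        rw [← mul_pow]
        congr 1
        simp only []
        rw [dif_pos e.1.2, dif_pos e.1.2]
        rcases Nat.even_or_odd e.2.1 with hj | hj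
        · rw [if_pos hj, if_neg (Nat.not_even_iff_odd.2 hj.add_one), mul_inv]
          exact mul_mul_mul_comm _ _ _ _
        · rw [if_neg (Nat.not_even_iff_odd.2 hj), if_pos hj.add_one, mul_inv, mul_comm s⁻¹]
          exact mul_mul_mul_comm _ _ _ _
      rw [hO, hO, hE, hE, mul_one, mul_one, hpow] at h1
      exact mul_right_cancel h1
    · intro s t p hs ht
      have h1 := h s t (fun i j => if hi : Even (k i) then
          p ⟨i, hi⟩ j else (if Even j then s else t)) (by
        intro i
        split_ifs with hi hj
        · exact hs _
        · rfl
        · exact absurd Even.zero hj) (by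
        intro i
        split_ifs with hi
        · exact ht ⟨i, hi⟩
        · rfl)
      rw [pv_split, pv_split] at h1
      have hE : (fun (i : {i : Fin r // Even (k i)}) j => if hi : Even (k i.1) then
            p ⟨i.1, hi⟩ j else (if Even j then s else t)) = p := by
        funext i j
        rw [dif_pos i.2]
      have hO : ∀ c, pv K (fun i : {i : Fin r // Odd (k i)} => k i.1)
          (fun i j => if hi : Even (k i.1) then
            p ⟨i.1, hi⟩ j else (if Even j then s else t)) c = (s * t) ^ wt c := by
        intro c
        apply pv_const
        intro i j
        have := Nat.not_even_iff_odd.2 i.2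
        rw [dif_neg this, dif_neg this]
        rcases Nat.even_or_odd j with hj | hj
        · rw [if_pos hj, if_neg (Nat.not_even_iff_odd.2 hj.add_one)]
        · rw [if_neg (Nat.not_even_iff_odd.2 hj), if_pos hj.add_one, mul_comm]
      rw [hO, hO, hpow, hE] at h1
      exact mul_left_cancel h1
  · rintro ⟨⟨h1, hw1⟩, h2, hw2⟩
    refine ⟨fun s t p hs ht => ?_, ?_⟩
    · rw [pv_split, pv_split,
        h1 s t (fun i => p i.1) (fun i => hs i.1) (fun i => ht i.1),
        h2 s t (fun i => p i.1) (fun i => hs i.1) (fun i => ht i.1)]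
    · rw [wt_split, wt_split k b]
      exact hw1.add hw2

theorem exists_glue (b₁ : ((i : {i : Fin r // Odd (k i)}) × Fin (k i.1)) → ℕ)
    (b₂ : ((i : {i : Fin r // Even (k i)}) × Fin (k i.1)) → ℕ) :
    ∃ b : ((i : Fin r) × Fin (k i)) → ℕ, resO k b = b₁ ∧ resE k b = b₂ := by
  classical
  refine ⟨fun e => if h : Odd (k e.1) then b₁ ⟨⟨e.1, h⟩, e.2⟩
    else b₂ ⟨⟨e.1, Nat.not_odd_iff_even.1 h⟩, e.2⟩, ?_, ?_⟩
  · funext e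
    simp [resO, e.1.2]
  · funext e
    have := Nat.not_odd_iff_even.2 e.1.2
    simp [resE, this]

theorem isMax_add (hk : ∀ i, 0 < k i) (M₁ M₂ : ℕ)
    (h₁ : (parallelComp fun i : {i : Fin r // Odd (k i)} => k i.1).IsMax K M₁)
    (h₂ : (parallelComp fun i : {i : Fin r // Even (k i)} => k i.1).IsMax K M₂) :
    (parallelComp k).IsMax K (M₁ + M₂) := by
  obtain ⟨h₁, a₁, ha₁⟩ := h₁
  obtain ⟨h₂, a₂, ha₂⟩ := h₂
  constructor
  · intro a
    obtain ⟨b₁, hb₁, hw₁⟩ := h₁ (resO k a)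
    obtain ⟨b₂, hb₂, hw₂⟩ := h₂ (resE k a)
    obtain ⟨b, rfl, rfl⟩ := exists_glue k b₁ b₂
    refine ⟨b, (eqv_iff K k hk _ _).2 ⟨hb₁, hb₂⟩, ?_⟩
    rw [wt_split]
    omega
  · obtain ⟨a, rfl, rfl⟩ := exists_glue k a₁ a₂
    refine ⟨a, fun b hb => ?_⟩
    obtain ⟨hb₁, hb₂⟩ := (eqv_iff K k hk _ _).1 hb
    rw [wt_split]
    exact add_le_add (ha₁ _ hb₁) (ha₂ _ hb₂)

end Parallel

/-- **Theorem 1.2.**  Let `G` be the parallel composition of `r ≥ 2` paths whose lengths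
have mixed parities, `H₁` the parallel composition of the paths of odd length and `H₂`
the parallel composition of the paths of even length.  Then
`reg G = reg H₁ + reg H₂ + (q-2)`, where `q = |K|`. -/
theorem reg_parallelComp_mixed_parity
    (K : Type) [Field K] [Fintype K] (r : ℕ) (hr : 2 ≤ r)
    (k : Fin r → ℕ) (hk : ∀ i, 0 < k i)
    (hodd : ∃ i, Odd (k i)) (heven : ∃ i, Even (k i)) :
    (parallelComp k).reg K =
      (parallelComp fun i : {i : Fin r // Odd (k i)} => k i.1).reg K +
      (parallelComp fun i : {i : Fin r // Even (k i)} => k i.1).reg K +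
      (Fintype.card K - 2) := by
  obtain ⟨i₁, hi₁⟩ := hodd
  obtain ⟨i₂, hi₂⟩ := heven
  have : Nonempty ((i : {i : Fin r // Odd (k i)}) × Fin (k i.1)) := ⟨⟨⟨i₁, hi₁⟩, ⟨0, hk i₁⟩⟩⟩
  have : Nonempty ((i : {i : Fin r // Even (k i)}) × Fin (k i.1)) := ⟨⟨⟨i₂, hi₂⟩, ⟨0, hk i₂⟩⟩⟩
  have : Nonempty ((i : Fin r) × Fin (k i)) := ⟨⟨i₁, ⟨0, hk i₁⟩⟩⟩
  obtain ⟨M₁, hM₁⟩ := (parallelComp fun i : {i : Fin r // Odd (k i)} => k i.1).exists_isMax K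
  obtain ⟨M₂, hM₂⟩ := (parallelComp fun i : {i : Fin r // Even (k i)} => k i.1).exists_isMax K
  have e₁ := Multigraph.reg_add K _ _ hM₁
  have e₂ := Multigraph.reg_add K _ _ hM₂
  have e := Multigraph.reg_add K _ _ (isMax_add K k hk M₁ M₂ hM₁ hM₂)
  omega
end

section
/- Let G be a graph with X the projective toric subset it parameterizes, and let v_1 and v_2 be two distinct vertices of G not joined by any edge of G. Let G' be the graph with the same edge set as G obtained by identifying v_1 with v_2 (each edge of G keeps its endpoints, with v_1 and v_2 replaced by the merged vertex), and let X' be the projective toric subset parameterized by G'. Then reg(G) ≥ reg(G'). -/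
open MvPolynomial

namespace Multigraph

/-- A choice of representative of a set of affine points. -/
noncomputable def rep {E K : Type} [Zero K] (P : Set (E → K)) : E → K :=
  Classical.epsilon (fun p => p ∈ P)

theorem rep_mem {V E : Type} (K : Type) [Field K] [Fintype K] (G : Multigraph V E)
    {P : Set (E → K)} (hP : P ∈ G.toricSet K) : rep P ∈ P := by
  obtain ⟨x, rfl⟩ := hP
  exact Classical.epsilon_spec (p := fun p => p ∈ MulAction.orbit Kˣ (G.point K x))
    ⟨_, MulAction.mem_orbit_self _⟩

theorem rep_ne_zero {V E : Type} (K : Type) [Field K] [Fintype K] (G : Multigraph V E)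
    {P : Set (E → K)} (hP : P ∈ G.toricSet K) (e : E) : rep P e ≠ 0 := by
  have h := rep_mem K G hP
  obtain ⟨x, rfl⟩ := hP
  obtain ⟨c, hc⟩ := h
  rw [← hc]
  simp [point, Units.smul_def]

theorem orbit_rep {V E : Type} (K : Type) [Field K] [Fintype K] (G : Multigraph V E)
    {P : Set (E → K)} (hP : P ∈ G.toricSet K) : MulAction.orbit Kˣ (rep P) = P := by
  have h := rep_mem K G hP
  obtain ⟨x, rfl⟩ := hP
  exact MulAction.orbit_eq_iff.2 h

/-- Evaluation of degree `d` forms at the representatives. -/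
noncomputable def evMap {V E : Type} (K : Type) [Field K] [Fintype K] (G : Multigraph V E)
    (d : ℕ) : homogeneousSubmodule E K d →ₗ[K] (G.toricSet K → K) :=
  LinearMap.pi fun P => (aeval (R := K) (rep P.1)).toLinearMap ∘ₗ
    (homogeneousSubmodule E K d).subtype

theorem evMap_apply {V E : Type} (K : Type) [Field K] [Fintype K] (G : Multigraph V E)
    (d : ℕ) (f : homogeneousSubmodule E K d) (P : G.toricSet K) :
    evMap K G d f P = eval (rep P.1) f.1 := by
  simp [evMap, aeval_eq_eval]

theorem eval_smul_homog {E K : Type} [Field K] {d : ℕ} {f : MvPolynomial E K}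
    (hf : f.IsHomogeneous d) (c : K) (p : E → K) :
    eval (c • p) f = c ^ d * eval p f := by
  rw [eval_eq, eval_eq, Finset.mul_sum]
  refine Finset.sum_congr rfl fun m hm => ?_
  have h1 : m.degree = d := by
    have := hf (mem_support_iff.1 hm)
    rw [← this, Finsupp.degree_eq_weight_one]; rfl
  simp only [Pi.smul_apply, smul_eq_mul, mul_pow, Finset.prod_mul_distrib, Finset.prod_pow_eq_pow_sum]
  rw [← h1, Finsupp.degree_apply]
  ring

theorem hilbert_eq_s6 {V E : Type} (K : Type) [Field K] [Fintype K] (G : Multigraph V E)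
    (d : ℕ) : G.hilbert K d = Module.finrank K (LinearMap.range (evMap K G d)) := by
  set φ := (Ideal.Quotient.mkₐ K (G.vanishingIdeal K)).toLinearMap ∘ₗ
    (homogeneousSubmodule E K d).subtype with hφ
  have hker : LinearMap.ker φ = LinearMap.ker (evMap K G d) := by
    ext f
    have hf : f.1.IsHomogeneous d := f.2
    have h1 : f ∈ LinearMap.ker φ ↔ f.1 ∈ G.vanishingIdeal K := by
      simp [hφ, LinearMap.mem_ker, Ideal.Quotient.eq_zero_iff_mem]
    rw [h1, LinearMap.mem_ker]
    constructor
    · intro h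
      funext P
      rw [evMap_apply]
      obtain ⟨P, x, rfl⟩ := P
      obtain ⟨c, hc⟩ := rep_mem K G (Set.mem_range_self x)
      have h2 := h x d
      rw [homogeneousComponent_of_mem f.2, if_pos rfl] at h2
      have hc' : rep (MulAction.orbit Kˣ (G.point K x)) = (c : K) • G.point K x := hc.symm
      show eval (rep (MulAction.orbit Kˣ (G.point K x))) f.1 = 0
      rw [hc', eval_smul_homog hf, h2, mul_zero]
    · intro h x n
      rw [homogeneousComponent_of_mem f.2]
      split_ifs
      · have h2 := congrFun h ⟨_, Set.mem_range_self x⟩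
        rw [evMap_apply] at h2
        have h3 := MulAction.mem_orbit_self (M := Kˣ) (G.point K x)
        rw [← orbit_rep K G (Set.mem_range_self x)] at h3
        obtain ⟨c, hc⟩ := h3
        have hc' : G.point K x = (c : K) • rep (MulAction.orbit Kˣ (G.point K x)) := hc.symm
        rw [hc', eval_smul_homog hf]
        exact mul_eq_zero_of_right _ h2
      · simp
  have hr : (homogeneousSubmodule E K d).map
      (Ideal.Quotient.mkₐ K (G.vanishingIdeal K)).toLinearMap = LinearMap.range φ := by
    rw [hφ, LinearMap.range_comp, Submodule.range_subtype]
  unfold hilbert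
  rw [hr]
  exact ((φ.quotKerEquivRange.symm.trans (Submodule.quotEquivOfEq _ _ hker)).trans
    (evMap K G d).quotKerEquivRange).finrank_eq

theorem hilbert_eq_iff {V E : Type} [Fintype V] (K : Type) [Field K] [Fintype K]
    (G : Multigraph V E) (d : ℕ) :
    G.hilbert K d = (G.toricSet K).ncard ↔ Function.Surjective (evMap K G d) := by
  classical
  have : Finite (G.toricSet K) := (Set.finite_range _).to_subtype
  have : Fintype (G.toricSet K) := Fintype.ofFinite _
  have hc : (G.toricSet K).ncard = Module.finrank K (G.toricSet K → K) := by
    rw [Module.finrank_fintype_fun_eq_card, ← Nat.card_eq_fintype_card, Nat.card_coe_set_eq]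
  rw [hilbert_eq_s6, hc, ← LinearMap.range_eq_top]
  constructor
  · exact Submodule.eq_top_of_finrank_eq
  · intro h
    rw [h, finrank_top]

theorem exists_form {V E : Type} (K : Type) [Field K] [Fintype K] (G : Multigraph V E)
    {P Q : Set (E → K)} (hP : P ∈ G.toricSet K) (hQ : Q ∈ G.toricSet K) (hPQ : P ≠ Q) :
    ∃ f : MvPolynomial E K, f.IsHomogeneous 1 ∧ eval (rep Q) f = 0 ∧ eval (rep P) f ≠ 0 := by
  have h : ∃ e e', rep P e * rep Q e' ≠ rep P e' * rep Q e := by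
    by_contra! hcon
    apply hPQ
    rw [← orbit_rep K G hP, ← orbit_rep K G hQ]
    rcases isEmpty_or_nonempty E with hE | ⟨⟨e0⟩⟩
    · congr 1
      exact Subsingleton.elim _ _
    · rw [MulAction.orbit_eq_iff]
      have hp := rep_ne_zero K G hP e0
      have hq := rep_ne_zero K G hQ e0
      refine ⟨Units.mk0 (rep P e0 / rep Q e0) (div_ne_zero hp hq), ?_⟩
      funext e
      simp only [Units.smul_def, Pi.smul_apply, Units.val_mk0, smul_eq_mul]
      have := hcon e e0
      field_simp
      linear_combination -this
  obtain ⟨e, e', h⟩ := h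
  refine ⟨C (rep Q e') * X e - C (rep Q e) * X e', ?_, ?_, ?_⟩
  · exact (isHomogeneous_C_mul_X _ _).sub (isHomogeneous_C_mul_X _ _)
  · simp [mul_comm]
  · simp only [map_sub, map_mul, eval_C, eval_X]
    rw [sub_ne_zero]
    intro h'
    apply h
    linear_combination h'

theorem exists_surj {V E : Type} [Fintype V] (K : Type) [Field K] [Fintype K]
    (G : Multigraph V E) : ∃ d, Function.Surjective (evMap K G d) := by
  classical
  have : Finite (G.toricSet K) := (Set.finite_range _).to_subtype
  have : Fintype (G.toricSet K) := Fintype.ofFinite _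
  refine ⟨Fintype.card (G.toricSet K) - 1, ?_⟩
  have key : ∀ P : G.toricSet K, ∃ f : homogeneousSubmodule E K (Fintype.card (G.toricSet K) - 1),
      (∀ Q, Q ≠ P → evMap K G _ f Q = 0) ∧ evMap K G _ f P ≠ 0 := by
    intro P
    have h1 : ∀ Q : G.toricSet K, ∃ f : MvPolynomial E K, Q ≠ P →
        (f.IsHomogeneous 1 ∧ eval (rep Q.1) f = 0 ∧ eval (rep P.1) f ≠ 0) := by
      intro Q
      by_cases hQ : Q = P
      · exact ⟨0, fun h => absurd hQ h⟩
      · obtain ⟨f, hf⟩ := exists_form K G P.2 Q.2 (fun h => hQ (Subtype.ext h.symm))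
        exact ⟨f, fun _ => hf⟩
    choose F hF using h1
    refine ⟨⟨∏ Q ∈ Finset.univ.erase P, F Q, ?_⟩, ?_, ?_⟩
    · have := IsHomogeneous.prod (Finset.univ.erase P) F (fun _ => 1)
        (fun Q hQ => (hF Q (Finset.ne_of_mem_erase hQ)).1)
      rw [mem_homogeneousSubmodule]
      simpa [Finset.card_erase_of_mem] using this
    · intro Q hQ
      rw [evMap_apply, map_prod]
      exact Finset.prod_eq_zero (Finset.mem_erase.2 ⟨hQ, Finset.mem_univ _⟩) (hF Q hQ).2.1
    · rw [evMap_apply, map_prod]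
      exact Finset.prod_ne_zero_iff.2 fun Q hQ => (hF Q (Finset.ne_of_mem_erase hQ)).2.2
  choose F hF0 hF1 using key
  intro g
  refine ⟨∑ P, (g P / evMap K G _ (F P) P) • F P, ?_⟩
  funext Q
  rw [map_sum, Finset.sum_apply, Finset.sum_eq_single Q]
  · simp [hF1 Q]
  · intro P _ hPQ
    simp [hF0 P Q hPQ.symm]
  · simp

theorem toricSet_identifyVert_subset {V E : Type} [DecidableEq V]
    (K : Type) [Field K] [Fintype K]
    (G : Multigraph V E) (v₁ v₂ : V) (h12 : v₁ ≠ v₂)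
    (hne : ∀ e, ¬ (G.Incident v₁ e ∧ G.Incident v₂ e)) :
    (G.identifyVert v₁ v₂ h12 hne).toricSet K ⊆ G.toricSet K := by
  rintro _ ⟨x, rfl⟩
  refine ⟨fun v => x ⟨if v = v₂ then v₁ else v, by split_ifs with hh; exacts [h12, hh]⟩, ?_⟩
  rfl

end Multigraph

/-- **Proposition 2.6.**  Let `v₁, v₂` be two distinct vertices of `G` not joined by
any edge, and let `G'` be the graph obtained by identifying `v₁` with `v₂`.  Then
`reg G ≥ reg G'`. -/
theorem reg_identifyVert_le
    {V E : Type} [Fintype V] [DecidableEq V] [Fintype E] [DecidableEq E]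
    (K : Type) [Field K] [Fintype K]
    (G : Multigraph V E) (hG : G.NoIsolated) (v₁ v₂ : V) (h12 : v₁ ≠ v₂)
    (hne : ∀ e, ¬ (G.Incident v₁ e ∧ G.Incident v₂ e)) :
    (G.identifyVert v₁ v₂ h12 hne).reg K ≤ G.reg K := by
  have hsub := Multigraph.toricSet_identifyVert_subset K G v₁ v₂ h12 hne
  have hmem : G.reg K ∈ {d : ℕ | G.hilbert K d = (G.toricSet K).ncard} := by
    apply Nat.sInf_mem
    obtain ⟨d, hd⟩ := Multigraph.exists_surj K G
    exact ⟨d, (Multigraph.hilbert_eq_iff K G d).2 hd⟩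
  have hs := (Multigraph.hilbert_eq_iff K G _).1 hmem
  apply Nat.sInf_le
  refine (Multigraph.hilbert_eq_iff K _ _).2 fun g => ?_
  classical
  obtain ⟨f, hf⟩ := hs (fun P => if h : P.1 ∈ (G.identifyVert v₁ v₂ h12 hne).toricSet K
    then g ⟨P.1, h⟩ else 0)
  refine ⟨f, ?_⟩
  funext P
  have := congrFun hf ⟨P.1, hsub P.2⟩
  rw [Multigraph.evMap_apply] at this ⊢
  simpa using this
end
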